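/- Let A = {0,1,2} and N = 10, and for K ≥ 0 let m(K) denote the minimum, over all subsets Y of A^{N+K} of cardinality 3^N = 59049, of the average (1/3^N) · Σ_{y ∈ Y} I(y) of the empirical information content of the strings in Y, where for a string s of length L the empirical information content is I(s) = −Σ_{j=1}^{L} log₂(n_{s_j}/L) and n_a is the number of occurrences of the symbol a in s (with m(0) equal to the average of I over all of A^N). Then m(1) < m(0); that is, there is a set of 3^{10} strings of length 11 over A whose average empirical information content is strictly smaller than the average empirical information content of all 3^{10} strings of length 10 over A, so a bijection f : A^{10} → Y onto this set lengthens every string while strictly decreasing average information content. -/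

import Mathlib

open Finset

/-- Empirical information content of a string `s` of length `L` over an alphabet `A`:
`I(s) = -∑_{j=1}^{L} log₂ (n_{s_j} / L)`, where `n_a` is the number of occurrences
of the symbol `a` in `s`. -/
noncomputable def info {A : Type*} [DecidableEq A] {L : ℕ} (s : Fin L → A) : ℝ :=
  -∑ j : Fin L, Real.logb 2 (((univ.filter fun i => s i = s j).card : ℝ) / L)

/-- `m K` is the minimum, over all subsets `Y` of `A^{10+K}` (with `A = {0,1,2}`)
of cardinality `3^10`, of the average empirical information content
`(1/3^10) · ∑_{y ∈ Y} I(y)`. -/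
noncomputable def m (K : ℕ) : ℝ :=
  ((univ : Finset (Fin (10 + K) → Fin 3)).powersetCard (3 ^ 10)).inf'
    (Finset.powersetCard_nonempty.mpr
      (by
        simp only [Finset.card_univ, Fintype.card_fun, Fintype.card_fin]
        exact Nat.pow_le_pow_right (by norm_num) (by omega)))
    (fun Y => (∑ y ∈ Y, info y) / 3 ^ 10)

/-!
The information content of a string depends only on its symbol counts `k`:
`I = L log₂ L - ∑ₐ kₐ log₂ kₐ`, and `L! / ∏ₐ kₐ!` strings share the counts `k`. The best `Y` is
therefore read off from the few count vectors: take all strings of length 11 whose content is below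
a threshold, and fill up with strings attaining it. This gives an average of about 14.136 bits,
against 14.263 bits over all strings of length 10, a gap wide enough to round each `n log₂ n` to
hundredths of a bit and compare integers.
-/

theorem exists_subset_card_eq_sum_eq {α G : Type*} [AddCommGroup G] [LinearOrder G]
    [IsOrderedAddMonoid G] {s : Finset α} {f : α → G} {t : G} {n : ℕ}
    (hlt : #{x ∈ s | f x < t} ≤ n) (hle : n ≤ #{x ∈ s | f x ≤ t}) :
    ∃ u ⊆ s, #u = n ∧ ∑ x ∈ u, f x = n • t - ∑ x ∈ s, (t - f x)⁺ := by
  obtain ⟨u, hlt_u, hu_le, hcard⟩ :=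
    exists_subsuperset_card_eq (monotone_filter_right s fun _ _ => le_of_lt) hlt hle
  have hus : u ⊆ s := hu_le.trans (filter_subset _ _)
  have h_inside : ∀ x ∈ u, (t - f x)⁺ = t - f x := fun x hx =>
    posPart_of_nonneg (sub_nonneg.2 (mem_filter.1 (hu_le hx)).2)
  have h_outside : ∀ x ∈ s, x ∉ u → (t - f x)⁺ = 0 := fun x hx hxu =>
    posPart_of_nonpos <| sub_nonpos.2 <| not_lt.1 fun h => hxu (hlt_u (mem_filter.2 ⟨hx, h⟩))
  refine ⟨u, hus, hcard, ?_⟩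
  rw [← sum_subset hus h_outside, sum_congr rfl h_inside, sum_sub_distrib, sum_const, hcard,
    sub_sub_cancel]

section SymbolCount

variable {A : Type*} [Fintype A] [DecidableEq A] {L : ℕ}

/-- The type of a string in the sense of information theory: the number `n_a` of occurrences of
each symbol `a`. -/
def symbolCount (s : Fin L → A) (a : A) : ℕ := #{i | s i = a}

theorem sum_symbolCount (s : Fin L → A) : ∑ a, symbolCount s a = L := by
  simpa [symbolCount] using (card_eq_sum_card_fiberwise (f := s) (s := univ) (t := univ)
    (by simp)).symm

@[to_additive sum_comp_eq_sum_symbolCount_nsmul]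
theorem prod_comp_eq_prod_pow_symbolCount {M : Type*} [CommMonoid M] (f : A → M) (s : Fin L → A) :
    ∏ i, f (s i) = ∏ a, f a ^ symbolCount s a := by
  simp only [← prod_fiberwise' univ s f, prod_const, symbolCount]

theorem card_symbolCount_eq {k : A → ℕ} (hk : ∑ a, k a = L) :
    #{s : Fin L → A | symbolCount s = k} = Nat.multinomial univ k := by
  have h_monomial (s : Fin L → A) : ∏ i, (MvPolynomial.X (s i) : MvPolynomial A ℕ) =
      MvPolynomial.monomial (Finsupp.equivFunOnFinite.symm (symbolCount s)) 1 := by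
    rw [prod_comp_eq_prod_pow_symbolCount, MvPolynomial.monomial_eq,
      Finsupp.prod_fintype _ _ fun _ => pow_zero _, MvPolynomial.C_1, one_mul]
    rfl
  have h_coeff :=
    MvPolynomial.coeff_sum_X_pow_of_fintype (R := ℕ) (Finsupp.equivFunOnFinite.symm k) L
  rw [Fintype.sum_pow, MvPolynomial.coeff_sum, Finsupp.sum_fintype _ _ fun _ => rfl] at h_coeff
  simpa [h_monomial, MvPolynomial.coeff_monomial, hk,
    Finsupp.multinomial_eq_of_support_subset (subset_univ _)] using h_coeff

theorem sum_comp_symbolCount {M : Type*} [AddCommMonoid M] (F : (A → ℕ) → M) :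
    ∑ s : Fin L → A, F (symbolCount s) =
      ∑ k ∈ piAntidiag univ L, Nat.multinomial univ k • F k := by
  rw [← sum_fiberwise_of_maps_to' (t := piAntidiag univ L) (g := symbolCount)
    (fun s _ => by simp [sum_symbolCount])]
  refine sum_congr rfl fun k hk => ?_
  rw [sum_const, card_symbolCount_eq (mem_piAntidiag.1 hk).1]

theorem card_filter_symbolCount (p : (A → ℕ) → Prop) [DecidablePred p] :
    #{s : Fin L → A | p (symbolCount s)} =
      ∑ k ∈ piAntidiag univ L with p k, Nat.multinomial univ k := by
  rw [card_filter, sum_comp_symbolCount fun k => if p k then 1 else 0]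
  simp only [smul_eq_mul, mul_boole, sum_filter]

theorem info_eq_sub_sum_symbolCount (s : Fin L → A) :
    info s = L * Real.logb 2 L - ∑ a, symbolCount s a * Real.logb 2 (symbolCount s a) := by
  have h_term (a : A) : (symbolCount s a : ℝ) * Real.logb 2 (symbolCount s a / L) =
      symbolCount s a * Real.logb 2 (symbolCount s a) - symbolCount s a * Real.logb 2 L := by
    rcases eq_or_ne (symbolCount s a) 0 with h | h
    · simp [h]
    · have hL : L ≠ 0 := by
        rintro rfl
        simp [symbolCount] at h
      rw [Real.logb_div (mod_cast h) (mod_cast hL), mul_sub]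
  calc info s = -∑ a, (symbolCount s a : ℝ) * Real.logb 2 (symbolCount s a / L) := by
        simp only [← nsmul_eq_mul]
        rw [← sum_comp_eq_sum_symbolCount_nsmul (fun a => Real.logb 2 (symbolCount s a / L))]
        rfl
    _ = _ := by
        rw [sum_congr rfl fun a _ => h_term a, sum_sub_distrib, ← sum_mul, ← Nat.cast_sum,
          sum_symbolCount, neg_sub]

end SymbolCount

section Rounding

theorem logb_pow_mul_self (b : ℝ) (r n : ℕ) :
    Real.logb b ((n ^ (r * n) : ℕ) : ℝ) = r * (n * Real.logb b n) := by
  rw [Nat.cast_pow, Real.logb_pow, Nat.cast_mul, mul_assoc]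

theorem natLog_pow_mul_self_le (b r n : ℕ) :
    (Nat.log b (n ^ (r * n)) : ℝ) ≤ r * (n * Real.logb b n) :=
  (Real.natLog_le_logb _ b).trans_eq (logb_pow_mul_self b r n)

theorem le_natClog_pow_mul_self (b r n : ℕ) :
    r * (n * Real.logb b n) ≤ (Nat.clog b (n ^ (r * n)) : ℝ) := by
  rw [← logb_pow_mul_self, ← Real.natCeil_logb_natCast]
  exact Nat.le_ceil _

variable {A : Type*} [Fintype A]

/-- Lower bound for `r` times the information content of a string of length `L` with symbol
counts `k`, computable because `⌊r n log₂ n⌋` and `⌈r n log₂ n⌉` are integer logarithms of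
`n ^ (r n)`. -/
def scaledInfoLower (r L : ℕ) (k : A → ℕ) : ℤ :=
  Nat.log 2 (L ^ (r * L)) - ∑ a, (Nat.clog 2 (k a ^ (r * k a)) : ℤ)

/-- Upper bound for `r` times the information content of a string of length `L` with symbol
counts `k`, rounded in the opposite direction to `scaledInfoLower`. -/
def scaledInfoUpper (r L : ℕ) (k : A → ℕ) : ℤ :=
  Nat.clog 2 (L ^ (r * L)) - ∑ a, (Nat.log 2 (k a ^ (r * k a)) : ℤ)

variable [DecidableEq A] {L : ℕ}

theorem scaledInfoLower_le (r : ℕ) (s : Fin L → A) :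
    (scaledInfoLower r L (symbolCount s) : ℝ) ≤ r * info s := by
  rw [info_eq_sub_sum_symbolCount, mul_sub, mul_sum, scaledInfoLower]
  push_cast
  gcongr
  exacts [natLog_pow_mul_self_le 2 r L, le_natClog_pow_mul_self 2 r _]

theorem le_scaledInfoUpper (r : ℕ) (s : Fin L → A) :
    r * info s ≤ (scaledInfoUpper r L (symbolCount s) : ℝ) := by
  rw [info_eq_sub_sum_symbolCount, mul_sub, mul_sum, scaledInfoUpper]
  push_cast
  gcongr
  exacts [le_natClog_pow_mul_self 2 r L, natLog_pow_mul_self_le 2 r _]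

end Rounding

section Ternary

-- `1581` is the value of `scaledInfoUpper 100 11` at the symbol counts `(2, 3, 6)`, the last ones
-- needed to reach `3 ^ 10` strings.
theorem card_scaledInfoUpper_lt_le :
    #{s : Fin 11 → Fin 3 | scaledInfoUpper 100 11 (symbolCount s) < 1581} ≤ 3 ^ 10 := by
  rw [card_filter_symbolCount fun k => scaledInfoUpper 100 11 k < 1581]
  decide +kernel

theorem le_card_scaledInfoUpper_le :
    3 ^ 10 ≤ #{s : Fin 11 → Fin 3 | scaledInfoUpper 100 11 (symbolCount s) ≤ 1581} := by
  rw [card_filter_symbolCount fun k => scaledInfoUpper 100 11 k ≤ 1581]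
  decide +kernel

theorem sub_sum_scaledInfoUpper_lt_sum_scaledInfoLower :
    3 ^ 10 * 1581 - ∑ s : Fin 11 → Fin 3, (1581 - scaledInfoUpper 100 11 (symbolCount s))⁺ <
      ∑ s : Fin 10 → Fin 3, scaledInfoLower 100 10 (symbolCount s) := by
  rw [sum_comp_symbolCount fun k => (1581 - scaledInfoUpper 100 11 k)⁺, sum_comp_symbolCount]
  decide +kernel

theorem exists_card_eq_sum_info_lt :
    ∃ Y : Finset (Fin 11 → Fin 3), #Y = 3 ^ 10 ∧
      ∑ y ∈ Y, info y < ∑ s : Fin 10 → Fin 3, info s := by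
  obtain ⟨Y, -, hcard, hsum⟩ :=
    exists_subset_card_eq_sum_eq card_scaledInfoUpper_lt_le le_card_scaledInfoUpper_le
  refine ⟨Y, hcard, lt_of_mul_lt_mul_left (a := ((100 : ℕ) : ℝ)) ?_ (by positivity)⟩
  calc ((100 : ℕ) : ℝ) * ∑ y ∈ Y, info y
      ≤ ((∑ y ∈ Y, scaledInfoUpper 100 11 (symbolCount y) : ℤ) : ℝ) := by
        rw [mul_sum, Int.cast_sum]
        exact sum_le_sum fun y _ => le_scaledInfoUpper 100 y
    _ < ((∑ s : Fin 10 → Fin 3, scaledInfoLower 100 10 (symbolCount s) : ℤ) : ℝ) := by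
        rw [hsum]
        exact_mod_cast sub_sum_scaledInfoUpper_lt_sum_scaledInfoLower
    _ ≤ (100 : ℕ) * ∑ s : Fin 10 → Fin 3, info s := by
        rw [mul_sum, Int.cast_sum]
        exact sum_le_sum fun s _ => scaledInfoLower_le 100 s

theorem m_le {K : ℕ} {Y : Finset (Fin (10 + K) → Fin 3)} (hY : #Y = 3 ^ 10) :
    m K ≤ (∑ y ∈ Y, info y) / 3 ^ 10 :=
  inf'_le (fun Y : Finset (Fin (10 + K) → Fin 3) => (∑ y ∈ Y, info y) / 3 ^ 10)
    (mem_powersetCard_univ.2 hY)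

theorem m_zero : m 0 = (∑ s : Fin 10 → Fin 3, info s) / 3 ^ 10 := by
  refine le_antisymm (m_le (by simp)) (le_inf' _ _ fun Y hY => ?_)
  obtain rfl : Y = univ := (card_eq_iff_eq_univ Y).1 (by simp [mem_powersetCard_univ.1 hY])
  rfl

end Ternary

/-- With `A = {0,1,2}` and `N = 10`, shaping with `K = 1` strictly decreases the minimal
average empirical information content: `m 1 < m 0`. (Note `m 0` is the average of `I` over
all of `A^10`, since the only subset of `A^10` of cardinality `3^10` is `A^10` itself.) -/
theorem stmt_0 : m 1 < m 0 := by
  obtain ⟨Y, hcard, hsum⟩ := exists_card_eq_sum_info_lt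
  calc m 1 ≤ (∑ y ∈ Y, info y) / 3 ^ 10 := m_le hcard
    _ < (∑ s : Fin 10 → Fin 3, info s) / 3 ^ 10 := by gcongr
    _ = m 0 := m_zero.symm
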